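/- For every positive integer s, the number of lattice points in the dilation sP of the truncated regular simplex P, namely the cardinality of {x ∈ ℤ³ : 0 ≤ 3(x₁+x₂−x₃) ≤ 4s, 0 ≤ 3(x₁−x₂+x₃) ≤ 4s, 0 ≤ 3(−x₁+x₂+x₃) ≤ 4s, and 2s ≤ 3(x₁+x₂+x₃) ≤ 6s}, equals (23/81)s³ + (7/9)s² + (13/9)s + 1 if s ≡ 0 (mod 3); equals (23/81)s³ + (19/27)s² + (5/27)s − 95/81 if s ≡ 1 (mod 3); and equals (23/81)s³ + (17/27)s² + (23/27)s + 41/81 if s ≡ 2 (mod 3). -/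

import Mathlib

/-!
In the coordinates `a = -x₀ + x₁ + x₂`, `b = x₀ - x₁ + x₂`, `c = x₀ + x₁ - x₂`,
`d = 2s - (x₀ + x₁ + x₂)`, the lattice `ℤ³` becomes the set of integer quadruples of common parity
with `a + b + c + d = 2s`, and `sP` is cut out by `0 ≤ a, b, c, d ≤ 4s/3`. Halving the even
quadruples and the odd ones (minus one) turns the count into the number of `t : Fin 4 → ℕ` with
`∑ t = n` and all `t i ≤ m`, for `(n, m) = (s, ⌊2s/3⌋)` and `(n, m) = (s - 2, ⌊(4s - 3)/6⌋)`
(`card_points`).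

Since `n < 2(m + 1)`, at most one entry of a quadruple with sum `n` can exceed `m`. The full simplex has
`C(n + 3, 3)` points and each of the four disjoint corners `m < t i` is a translate of the simplex
of size `n - m - 1`, with `C(n - m + 2, 3)` points (`card_quads`). The three quasi-polynomials
follow by writing `s = 3k + r`; the case `s = 1`, where `s - 2 < 0`, is checked directly.
-/

open Finset

lemma mem_simplex {n : ℕ} {t : Fin 4 → ℕ} : t ∈ piAntidiag univ n ↔ ∑ i, t i = n := by
  simp [mem_piAntidiag]

/-- The quadruples of natural numbers with sum `n` and all entries at most `m`. -/
def quads (n m : ℕ) : Finset (Fin 4 → ℕ) :=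
  (piAntidiag univ n).filter fun t => ∀ i, t i ≤ m

lemma mem_quads {n m : ℕ} {t : Fin 4 → ℕ} :
    t ∈ quads n m ↔ t 0 + t 1 + t 2 + t 3 = n ∧ t 0 ≤ m ∧ t 1 ≤ m ∧ t 2 ≤ m ∧ t 3 ≤ m := by
  simp [quads, Fin.sum_univ_four, Fin.forall_fin_succ]

lemma card_simplex (n : ℕ) : (piAntidiag (univ : Finset (Fin 4)) n).card = (n + 3).choose 3 := by
  have h := card_finsuppAntidiag_nat_eq_choose (s := (univ : Finset (Fin 4))) n
  have e : (finsuppAntidiag (univ : Finset (Fin 4)) n).card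
      = (piAntidiag (univ : Finset (Fin 4)) n).card := by
    simp [finsuppAntidiag]
  rw [← e, h]
  simp only [card_univ, Fintype.card_fin]
  rw [show 4 + n - 1 = n + 3 by omega, ← Nat.choose_symm_add]

/-- A corner of the simplex is a translate of a smaller simplex. If `m = n` it is empty, in
agreement with `(2).choose 3 = 0`. -/
lemma card_corner {n m : ℕ} (hm : m ≤ n) (i : Fin 4) :
    ((piAntidiag (univ : Finset (Fin 4)) n).filter fun t => m < t i).card
      = (n + 2 - m).choose 3 := by
  rcases hm.eq_or_lt with rfl | hlt
  · rw [show m + 2 - m = 2 by omega, Nat.choose_eq_zero_of_lt (by norm_num : 2 < 3),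
      card_eq_zero, filter_eq_empty_iff]
    intro t ht
    simp only [mem_simplex] at ht
    have := single_le_sum (f := t) (fun _ _ => Nat.zero_le _) (mem_univ i)
    omega
  · obtain ⟨k, rfl⟩ : ∃ k, n = k + (m + 1) := ⟨n - (m + 1), by omega⟩
    rw [show k + (m + 1) + 2 - m = k + 3 by omega, ← card_simplex]
    symm
    refine card_bij (fun t _ => t + Pi.single i (m + 1)) ?_ ?_ ?_
    · intro t ht
      simp only [mem_simplex] at ht
      simp [sum_add_distrib, ht]
      omega
    · intro t _ u _ h
      exact add_right_cancel h
    · intro t ht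
      simp only [mem_filter, mem_simplex] at ht
      have e : t - Pi.single i (m + 1) + Pi.single i (m + 1) = t := by
        ext j
        by_cases hj : j = i
        · subst hj
          simp
          omega
        · simp [hj]
      refine ⟨t - Pi.single i (m + 1), ?_, e⟩
      have h := ht.1
      rw [← e] at h
      simp only [Pi.add_apply, sum_add_distrib, sum_pi_single', mem_univ, if_true] at h
      simp only [mem_simplex]
      omega

/-- The simplex is the disjoint union of the truncated one and its four corners; the hypothesis
`n < 2 * m + 2` says that no two corners meet. -/
lemma card_quads {n m : ℕ} (hm : m ≤ n) (hn : n < 2 * m + 2) :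
    (quads n m).card + 4 * (n + 2 - m).choose 3 = (n + 3).choose 3 := by
  have hc : ((piAntidiag (univ : Finset (Fin 4)) n).filter fun t => ¬ ∀ i, t i ≤ m).card
      = 4 * (n + 2 - m).choose 3 := by
    have e : ((piAntidiag (univ : Finset (Fin 4)) n).filter fun t => ¬ ∀ i, t i ≤ m)
        = univ.biUnion fun i => (piAntidiag univ n).filter fun t => m < t i := by
      ext t
      simp
    rw [e, card_biUnion]
    · simp [card_corner hm]
    · intro i _ j _ hij
      refine disjoint_left.2 fun t hi hj => ?_
      simp only [mem_filter, mem_simplex] at hi hj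
      have := add_le_sum (f := t) (fun _ _ => Nat.zero_le _) (mem_univ i) (mem_univ j) hij
      omega
  rw [← hc, ← card_simplex, quads, card_filter_add_card_filter_not]

/-- The lattice point whose coordinates `(a, b, c)` are twice `(t 0, t 1, t 2)`, plus `e`. -/
def point (e : ℤ) (t : Fin 4 → ℕ) : Fin 3 → ℤ :=
  ![t 1 + t 2 + e, t 0 + t 2 + e, t 0 + t 1 + e]

lemma point_injOn (e : ℤ) (n m : ℕ) : Set.InjOn (point e) (quads n m : Set (Fin 4 → ℕ)) := by
  intro t ht u hu h
  rw [mem_coe, mem_quads] at ht hu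
  have h0 := congrFun h 0
  have h1 := congrFun h 1
  have h2 := congrFun h 2
  simp [point] at h0 h1 h2
  funext i
  fin_cases i <;> simp <;> omega

/-- The first summand counts the lattice points of `sP` whose coordinates `(a, b, c, d)` are even,
the second those for which they are odd. -/
lemma card_points (s : ℕ) (hs : 2 ≤ s) :
    Nat.card {x : Fin 3 → ℤ //
      0 ≤ 3 * (x 0 + x 1 - x 2) ∧ 3 * (x 0 + x 1 - x 2) ≤ 4 * (s : ℤ) ∧
      0 ≤ 3 * (x 0 - x 1 + x 2) ∧ 3 * (x 0 - x 1 + x 2) ≤ 4 * (s : ℤ) ∧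
      0 ≤ 3 * (-x 0 + x 1 + x 2) ∧ 3 * (-x 0 + x 1 + x 2) ≤ 4 * (s : ℤ) ∧
      2 * (s : ℤ) ≤ 3 * (x 0 + x 1 + x 2) ∧ 3 * (x 0 + x 1 + x 2) ≤ 6 * (s : ℤ)}
    = (quads s (2 * s / 3)).card + (quads (s - 2) ((4 * s - 3) / 6)).card := by
  rw [← card_image_of_injOn (point_injOn 0 s (2 * s / 3)),
    ← card_image_of_injOn (point_injOn 1 (s - 2) ((4 * s - 3) / 6)),
    ← card_union_of_disjoint]
  · refine Nat.subtype_card _ fun x => ?_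
    simp only [mem_union, mem_image, mem_quads]
    constructor
    · rintro (⟨t, ht, rfl⟩ | ⟨t, ht, rfl⟩) <;> simp [point] <;> omega
    · intro hx
      rcases Int.even_or_odd' (x 0 + x 1 + x 2) with ⟨q, hq | hq⟩
      · refine Or.inl ⟨![(q - x 0).toNat, (q - x 1).toNat, (q - x 2).toNat, (s - q).toNat], ?_, ?_⟩
        · simp
          omega
        · funext i
          fin_cases i <;> simp [point] <;> omega
      · refine Or.inr ⟨![(q - x 0).toNat, (q - x 1).toNat, (q - x 2).toNat, (s - 1 - q).toNat],
          ?_, ?_⟩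
        · simp
          omega
        · funext i
          fin_cases i <;> simp [point] <;> omega
  -- The coordinate sum is even on the first part and odd on the second.
  · refine disjoint_left.2 fun x hx hy => ?_
    obtain ⟨t, -, rfl⟩ := mem_image.1 hx
    obtain ⟨u, -, h⟩ := mem_image.1 hy
    have h0 := congrFun h 0
    have h1 := congrFun h 1
    have h2 := congrFun h 2
    simp [point] at h0 h1 h2
    omega

lemma cast_choose_three (n : ℕ) : ((n + 2).choose 3 : ℚ) = n * (n + 1) * (n + 2) / 6 := by
  induction n with
  | zero => simp
  | succ n ih =>
    have h2 : ((n + 2).choose 2 : ℚ) = (n + 2) * (n + 1) / 2 := by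
      rw [Nat.cast_choose_two]
      push_cast
      ring
    rw [show n + 1 + 2 = (n + 2) + 1 by ring, Nat.choose_succ_succ' (n + 2) 2, Nat.cast_add, ih, h2]
    push_cast
    ring

/-- `card_quads` as a polynomial identity, with `p = n - m`. -/
lemma cast_card_quads {n m : ℕ} (p : ℕ) (hp : n = m + p) (hn : n < 2 * m + 2) :
    ((quads n m).card : ℚ) =
      (n + 1) * (n + 2) * (n + 3) / 6 - 4 * (p * (p + 1) * (p + 2) / 6) := by
  have h := card_quads (by omega : m ≤ n) hn
  rw [show n + 2 - m = p + 2 by omega] at h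
  have hq : ((quads n m).card : ℚ) + 4 * ((p + 2).choose 3 : ℚ) = ((n + 1 + 2).choose 3 : ℚ) := by
    exact_mod_cast h
  rw [cast_choose_three, cast_choose_three] at hq
  push_cast at hq
  linarith

theorem truncated_simplex_ehrhart (s : ℕ) (hs : 0 < s) :
    (s % 3 = 0 →
      ((Nat.card {x : Fin 3 → ℤ //
          0 ≤ 3 * (x 0 + x 1 - x 2) ∧ 3 * (x 0 + x 1 - x 2) ≤ 4 * (s : ℤ) ∧
          0 ≤ 3 * (x 0 - x 1 + x 2) ∧ 3 * (x 0 - x 1 + x 2) ≤ 4 * (s : ℤ) ∧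
          0 ≤ 3 * (-x 0 + x 1 + x 2) ∧ 3 * (-x 0 + x 1 + x 2) ≤ 4 * (s : ℤ) ∧
          2 * (s : ℤ) ≤ 3 * (x 0 + x 1 + x 2) ∧ 3 * (x 0 + x 1 + x 2) ≤ 6 * (s : ℤ)} : ℚ) =
        23 / 81 * (s : ℚ) ^ 3 + 7 / 9 * (s : ℚ) ^ 2 + 13 / 9 * (s : ℚ) + 1)) ∧
    (s % 3 = 1 →
      ((Nat.card {x : Fin 3 → ℤ //
          0 ≤ 3 * (x 0 + x 1 - x 2) ∧ 3 * (x 0 + x 1 - x 2) ≤ 4 * (s : ℤ) ∧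
          0 ≤ 3 * (x 0 - x 1 + x 2) ∧ 3 * (x 0 - x 1 + x 2) ≤ 4 * (s : ℤ) ∧
          0 ≤ 3 * (-x 0 + x 1 + x 2) ∧ 3 * (-x 0 + x 1 + x 2) ≤ 4 * (s : ℤ) ∧
          2 * (s : ℤ) ≤ 3 * (x 0 + x 1 + x 2) ∧ 3 * (x 0 + x 1 + x 2) ≤ 6 * (s : ℤ)} : ℚ) =
        23 / 81 * (s : ℚ) ^ 3 + 19 / 27 * (s : ℚ) ^ 2 + 5 / 27 * (s : ℚ) - 95 / 81)) ∧
    (s % 3 = 2 →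
      ((Nat.card {x : Fin 3 → ℤ //
          0 ≤ 3 * (x 0 + x 1 - x 2) ∧ 3 * (x 0 + x 1 - x 2) ≤ 4 * (s : ℤ) ∧
          0 ≤ 3 * (x 0 - x 1 + x 2) ∧ 3 * (x 0 - x 1 + x 2) ≤ 4 * (s : ℤ) ∧
          0 ≤ 3 * (-x 0 + x 1 + x 2) ∧ 3 * (-x 0 + x 1 + x 2) ≤ 4 * (s : ℤ) ∧
          2 * (s : ℤ) ≤ 3 * (x 0 + x 1 + x 2) ∧ 3 * (x 0 + x 1 + x 2) ≤ 6 * (s : ℤ)} : ℚ) =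
        23 / 81 * (s : ℚ) ^ 3 + 17 / 27 * (s : ℚ) ^ 2 + 23 / 27 * (s : ℚ) + 41 / 81)) := by
  refine ⟨fun h => ?_, fun h => ?_, fun h => ?_⟩
  · obtain ⟨k, rfl⟩ : ∃ k, s = 3 * (k + 1) := ⟨s / 3 - 1, by omega⟩
    rw [card_points _ (by omega), Nat.cast_add, cast_card_quads (k + 1) (by omega) (by omega),
      cast_card_quads k (by omega) (by omega), show 3 * (k + 1) - 2 = 3 * k + 1 by omega]
    push_cast
    ring
  · obtain ⟨k, rfl⟩ : ∃ k, s = 3 * k + 1 := ⟨s / 3, by omega⟩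
    rcases k with _ | k
    -- `P` itself contains no lattice point.
    · rw [Nat.card_eq_zero.2 (Or.inl ⟨fun x => by have := x.2; push_cast at this; omega⟩)]
      norm_num
    · rw [card_points _ (by omega), Nat.cast_add, cast_card_quads (k + 2) (by omega) (by omega),
        cast_card_quads k (by omega) (by omega), show 3 * (k + 1) + 1 - 2 = 3 * k + 2 by omega]
      push_cast
      ring
  · obtain ⟨k, rfl⟩ : ∃ k, s = 3 * k + 2 := ⟨s / 3, by omega⟩
    rw [card_points _ (by omega), Nat.cast_add, cast_card_quads (k + 1) (by omega) (by omega),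
      cast_card_quads k (by omega) (by omega), show 3 * k + 2 - 2 = 3 * k by omega]
    push_cast
    ring
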